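/- Let k be an algebraically closed field of characteristic 2 and ζ ∈ k a primitive cube root of unity. Let G = A₄ = ⟨σ, ρ : σ² = ρ³ = (σρ)³ = 1⟩, set τ := ρσρ⁻¹, and let H = ⟨σ, τ⟩ be the unique Sylow 2-subgroup of G. For n ≥ 1 and φ ∈ k let V_φ be the 2n-dimensional representation of H over k given in block form by σ ↦ [[I_n, ζ(I_n + J_n(φ))], [0, I_n]] and τ ↦ [[I_n, ζ²I_n + J_n(φ)], [0, I_n]]. If φ, ψ ∈ k \ {0} satisfy φ³ = ψ³, then Ind_H^G V_φ ≅ Ind_H^G V_ψ as representations of G over k. -/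

import Mathlib

/-- The `n × n` upper-triangular Jordan block over `k` with eigenvalue `lam`. -/
def jordanBlock (k : Type) [Field k] (n : ℕ) (lam : k) : Matrix (Fin n) (Fin n) k :=
  Matrix.of fun i j => if i = j then lam else if (i : ℕ) + 1 = (j : ℕ) then 1 else 0

/-!
Conjugation by `ρ` sends `(σ, τ)` to `(τ, τσ)`, and `Ind V ≅ Ind (V ∘ conj ρ)`. On the upper right
blocks, conjugation acts on `V_φ` by `(ζ(1 + J(φ)), ζ² + J(φ)) ↦ (ζ² + J(φ), 1 + ζ²J(φ))`. With `D`
the diagonal matrix of powers of `ζ²` one has `J(ζ²ψ) D = ζ² D J(ψ)`, so for `φ = ζ²ψ` conjugation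
by `D` turns these blocks into `ζ` times those of `V_ψ`. Hence `Ind V_{ζ²ψ} ≅ Ind V_ψ`, and
`φ³ = ψ³` says that `φ` and `ψ` differ by a power of `ζ²`.
-/

open Representation

section Induction

variable {k G K K' W X X' : Type*} [CommRing k] [Group G] [Group K] [Group K']
  [AddCommGroup W] [Module k W] [AddCommGroup X] [Module k X] [AddCommGroup X'] [Module k X']
  {f : K →* G} {f' : K' →* G} {V : Representation k K X} {V' : Representation k K' X'}
  {U : Representation k G W}

theorem indV_mk_map_mul (h : K) (g : G) (x : X) :
    IndV.mk f V (f h * g) (V h x) = IndV.mk f V g x := by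
  simp [← Coinvariants.mk_inv_tmul]

/-- The map `Ind V → U` corresponding to a map `V → Res U` under Frobenius reciprocity. -/
noncomputable def indLift (ι : V.IntertwiningMap (U.comp f)) : (ind f V).IntertwiningMap U where
  toLinearMap := Coinvariants.lift _
    (TensorProduct.lift <| (Finsupp.lift _ _ _ fun g => U g⁻¹ ∘ₗ ι.toLinearMap) ∘ₗ
      (MonoidAlgebra.coeffLinearEquiv k).toLinearMap)
    fun h => by
      ext g x
      simp [ι.isIntertwining]
  isIntertwining' g := by
    ext a x
    simp

theorem indLift_mk (ι : V.IntertwiningMap (U.comp f)) (g : G) (x : X) :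
    indLift ι (IndV.mk f V g x) = U g⁻¹ (ι x) := by
  simp [indLift]

/-- The map `Ind V' → Ind V` given by a map `P` from `V'` to the pullback of `V` along `α`, where
`α` is conjugation by `g`: it sends `⟦a ⊗ x⟧` to `⟦g * a ⊗ P x⟧`. -/
noncomputable def indConjMap (α : K' →* K) (g : G) (hα : ∀ h, f (α h) = g * f' h * g⁻¹)
    (P : V'.IntertwiningMap (V.comp α)) : (ind f' V').IntertwiningMap (ind f V) :=
  indLift ⟨IndV.mk f V g ∘ₗ P.toLinearMap, fun h => by
    ext x
    have hg : f (α h) * (g * (f' h)⁻¹) = g := by simp [hα]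
    calc IndV.mk f V g (P (V' h x)) = IndV.mk f V (f (α h) * (g * (f' h)⁻¹)) (V (α h) (P x)) := by
          rw [hg, P.isIntertwining]; rfl
      _ = ind f V (f' h) (IndV.mk f V g (P x)) := by rw [indV_mk_map_mul, ind_mk]⟩

theorem indConjMap_mk (α : K' →* K) (g : G) (hα : ∀ h, f (α h) = g * f' h * g⁻¹)
    (P : V'.IntertwiningMap (V.comp α)) (a : G) (x : X') :
    indConjMap α g hα P (IndV.mk f' V' a x) = IndV.mk f V (g * a) (P x) := by
  rw [indConjMap, indLift_mk]
  exact (ind_mk ..).trans (by rw [inv_inv]; rfl)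

/-- `Ind V' ≅ Ind V` if `V'` is isomorphic to the pullback of `V` along an isomorphism `α` that is
conjugation by `g`. -/
noncomputable def indConjEquiv (α : K' ≃* K) (g : G) (hα : ∀ h, f (α h) = g * f' h * g⁻¹)
    (P : V'.Equiv (V.comp α.toMonoidHom)) : (ind f' V').Equiv (ind f V) :=
  let Q : V.IntertwiningMap (V'.comp α.symm.toMonoidHom) :=
    ⟨P.symm.toLinearMap, fun h => by simpa using P.symm.isIntertwining' (α.symm h)⟩
  have hα' : ∀ h, f' (α.symm h) = g⁻¹ * f h * g⁻¹⁻¹ := fun h => by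
    rw [← α.apply_symm_apply h, hα]
    simp [mul_assoc]
  let A := indConjMap α.toMonoidHom g hα P.toIntertwiningMap
  let B := indConjMap α.symm.toMonoidHom g⁻¹ hα' Q
  have hAB (a : G) (x : X) : A (B (IndV.mk f V a x)) = IndV.mk f V a x := by
    calc A (B (IndV.mk f V a x)) = A (IndV.mk f' V' (g⁻¹ * a) (Q x)) :=
          congrArg A (indConjMap_mk ..)
      _ = IndV.mk f V (g * (g⁻¹ * a)) (P (Q x)) := indConjMap_mk ..
      _ = IndV.mk f V a x := by
          rw [mul_inv_cancel_left]; exact congrArg _ (P.apply_symm_apply x)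
  have hBA (a : G) (x : X') : B (A (IndV.mk f' V' a x)) = IndV.mk f' V' a x := by
    calc B (A (IndV.mk f' V' a x)) = B (IndV.mk f V (g * a) (P x)) :=
          congrArg B (indConjMap_mk ..)
      _ = IndV.mk f' V' (g⁻¹ * (g * a)) (Q (P x)) := indConjMap_mk ..
      _ = IndV.mk f' V' a x := by
          rw [inv_mul_cancel_left]; exact congrArg _ (P.symm_apply_apply x)
  .mk (.ofLinearMap A.toLinearMap B.toLinearMap
      (IndV.hom_ext _ _ fun a => LinearMap.ext (hAB a))
      (IndV.hom_ext _ _ fun a => LinearMap.ext (hBA a)))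
    A.isIntertwining'

end Induction

section InternalInduction

theorem bijective_toModule_of_isInternal_range {k I W : Type*} {M : I → Type*} [Ring k]
    [DecidableEq I] [AddCommGroup W] [Module k W] [∀ i, AddCommGroup (M i)] [∀ i, Module k (M i)]
    (f : ∀ i, M i →ₗ[k] W) (hf : ∀ i, Function.Injective (f i))
    (hint : DirectSum.IsInternal fun i => LinearMap.range (f i)) :
    Function.Bijective (DirectSum.toModule k I W f) := by
  have hfac : DirectSum.toModule k I W f =
      DirectSum.coeLinearMap (fun i => LinearMap.range (f i)) ∘ₗ
        DirectSum.lmap fun i => (f i).rangeRestrict := by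
    ext i x
    simp
  rw [hfac, LinearMap.coe_comp]
  exact hint.comp ⟨DirectSum.lmap_injective _ |>.2 fun i => by simpa using hf i,
    DirectSum.lmap_surjective _ |>.2 fun i => (f i).surjective_rangeRestrict⟩

variable {k G K I W X : Type*} [CommRing k] [Group G] [Group K] [DecidableEq I]
  [AddCommGroup W] [Module k W] [AddCommGroup X] [Module k X]
  {f : K →* G} {V : Representation k K X} {U : Representation k G W} {ι : X →ₗ[k] W} {s : I → G}

theorem surjective_toModule_indV_mk (hs : ∀ g : G, ∃ i h, g = s i * f h) :
    Function.Surjective (DirectSum.toModule k I _ fun i => IndV.mk f V (s i)⁻¹) := by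
  set Φ := DirectSum.toModule k I _ fun i => IndV.mk f V (s i)⁻¹
  rw [← LinearMap.range_eq_top, ← Submodule.ker_mkQ (LinearMap.range Φ), LinearMap.ker_eq_top]
  ext g x
  obtain ⟨i, h, hg⟩ := hs g⁻¹
  have hmem : IndV.mk f V g x ∈ LinearMap.range Φ := by
    refine ⟨DirectSum.lof k I (fun _ => X) i (V h x), ?_⟩
    rw [DirectSum.toModule_lof, ← indV_mk_map_mul h g x, inv_eq_iff_eq_inv.1 hg]
    simp
  exact (Submodule.Quotient.mk_eq_zero _).2 hmem

/-- The linear map `ι` embeds `V` equivariantly in `U`, and `U` is the internal direct sum of the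
translates of the image by the elements `s i`. If the `s i` represent all the cosets of the image of
`f`, this says that `U` is induced from `V`. -/
structure IsInternallyInduced (f : K →* G) (V : Representation k K X) (U : Representation k G W)
    (ι : X →ₗ[k] W) (s : I → G) : Prop where
  injective : Function.Injective ι
  map_apply : ∀ h x, ι (V h x) = U (f h) (ι x)
  isInternal : DirectSum.IsInternal fun i => (LinearMap.range ι).map (U (s i))

namespace IsInternallyInduced

/-- A representation that is internally induced from `V` is isomorphic to `Ind V`. -/
noncomputable def indEquiv (hU : IsInternallyInduced f V U ι s)
    (hs : ∀ g : G, ∃ i h, g = s i * f h) : (ind f V).Equiv U :=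
  let L := indLift ⟨ι, fun h => LinearMap.ext (hU.map_apply h)⟩
  let Φ := DirectSum.toModule k I _ fun i => IndV.mk f V (s i)⁻¹
  L.ofBijective <| by
    have hcomp : L.toLinearMap ∘ₗ Φ = DirectSum.toModule k I W fun i => U (s i) ∘ₗ ι := by
      ext i x
      simp only [LinearMap.comp_apply, Φ, DirectSum.toModule_lof]
      exact (indLift_mk ..).trans (by rw [inv_inv]; rfl)
    have hbij : Function.Bijective (L ∘ Φ) := by
      change Function.Bijective (L.toLinearMap ∘ₗ Φ)
      rw [hcomp]
      refine bijective_toModule_of_isInternal_range _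
        (fun i => (U.apply_bijective _).1.comp hU.injective) ?_
      simpa only [LinearMap.range_comp] using hU.isInternal
    exact ⟨hbij.1.of_comp_right (surjective_toModule_indV_mk hs), hbij.2.of_comp⟩

end IsInternallyInduced

end InternalInduction

section Generators

variable {G : Type*} [Group G] {σ ρ : G}

theorem conj_conj_eq_conj_mul (hσ : σ ^ 2 = 1) (hρ : ρ ^ 3 = 1) (hσρ : (σ * ρ) ^ 3 = 1) :
    ρ * (ρ * σ * ρ⁻¹) * ρ⁻¹ = ρ * σ * ρ⁻¹ * σ := by
  have hinv : σ⁻¹ = σ := inv_eq_of_mul_eq_one_right (by rwa [← pow_two])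
  have hprod : σ * (ρ * σ * ρ⁻¹) * (ρ * (ρ * σ * ρ⁻¹) * ρ⁻¹) = 1 := by
    calc _ = (σ * ρ) ^ 3 * (ρ ^ 3)⁻¹ := by simp [pow_succ, mul_assoc]
      _ = 1 := by rw [hσρ, hρ, inv_one, mul_one]
  rw [eq_inv_of_mul_eq_one_right hprod]
  simp [hinv, mul_assoc]

theorem normal_closure_pair_conj (hσ : σ ^ 2 = 1) (hρ : ρ ^ 3 = 1) (hσρ : (σ * ρ) ^ 3 = 1)
    (hgen : Subgroup.closure {σ, ρ} = ⊤) : (Subgroup.closure {σ, ρ * σ * ρ⁻¹}).Normal := by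
  have hσH : σ ∈ Subgroup.closure {σ, ρ * σ * ρ⁻¹} := Subgroup.mem_closure_of_mem (by simp)
  have hτH : ρ * σ * ρ⁻¹ ∈ Subgroup.closure {σ, ρ * σ * ρ⁻¹} :=
    Subgroup.mem_closure_of_mem (by simp)
  have hτσ := conj_conj_eq_conj_mul hσ hρ hσρ
  set τ := ρ * σ * ρ⁻¹
  have hσ_norm : σ ∈ Subgroup.normalizer (Subgroup.closure {σ, τ} : Set G) :=
    Subgroup.le_normalizer hσH
  have hρ_norm : ρ ∈ Subgroup.normalizer (Subgroup.closure {σ, τ} : Set G) := by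
    rw [Subgroup.mem_normalizer_iff_map_conj_eq, MonoidHom.map_closure, Set.image_pair]
    have hσ_conj : MulAut.conj ρ σ = τ := rfl
    have hτ_conj : MulAut.conj ρ τ = τ * σ := hτσ
    simp only [MonoidHom.coe_coe, hσ_conj, hτ_conj]
    apply le_antisymm <;> rw [Subgroup.closure_le, Set.pair_subset_iff]
    · exact ⟨hτH, mul_mem hτH hσH⟩
    · have hτ_mem : τ ∈ Subgroup.closure {τ, τ * σ} := Subgroup.mem_closure_of_mem (by simp)
      exact ⟨(Subgroup.mul_mem_cancel_left _ hτ_mem).1 (Subgroup.mem_closure_of_mem (by simp)),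
        hτ_mem⟩
  rw [← Subgroup.normalizer_eq_top_iff, eq_top_iff, ← hgen, Subgroup.closure_le]
  exact Set.pair_subset hσ_norm hρ_norm

theorem exists_eq_pow_mul_of_closure_pair_eq_top {H : Subgroup G} [H.Normal] {m : ℕ} [NeZero m]
    (hσH : σ ∈ H) (hρ : ρ ^ m = 1) (hgen : Subgroup.closure {σ, ρ} = ⊤) (g : G) :
    ∃ (i : Fin m) (h : H), g = ρ ^ (i : ℕ) * h := by
  have hsup : Subgroup.zpowers ρ ⊔ H = ⊤ := by
    rw [eq_top_iff, ← hgen, Subgroup.closure_le]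
    exact Set.pair_subset (Subgroup.mem_sup_right hσH)
      (Subgroup.mem_sup_left (Subgroup.mem_zpowers ρ))
  obtain ⟨_, ⟨j, rfl⟩, h, hh, rfl⟩ :=
    Subgroup.mem_sup_of_normal_right.1 (hsup ▸ Subgroup.mem_top g)
  have hm : (m : ℤ) ≠ 0 := by exact_mod_cast NeZero.ne m
  have hj : (((j % m).toNat : ℕ) : ℤ) = j % m := Int.toNat_of_nonneg (Int.emod_nonneg j hm)
  refine ⟨⟨(j % m).toNat, ?_⟩, ⟨h, hh⟩, ?_⟩
  · have := Int.emod_lt_of_pos j (Int.natCast_pos.2 (NeZero.pos m))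
    omega
  · rw [← zpow_natCast, hj, ← zpow_eq_zpow_emod' j hρ]

theorem closure_pair_subtype_eq_top (σ τ : G) (hσ : σ ∈ Subgroup.closure {σ, τ})
    (hτ : τ ∈ Subgroup.closure {σ, τ}) :
    Subgroup.closure {(⟨σ, hσ⟩ : Subgroup.closure {σ, τ}), ⟨τ, hτ⟩} = ⊤ := by
  convert Subgroup.closure_closure_coe_preimage (k := {σ, τ})
  ext ⟨g, hg⟩
  simp

end Generators

section JordanBlock

variable {k : Type} [Field k] {n : ℕ}

open Matrix

theorem jordanBlock_mul_diagonal_pow (μ φ : k) :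
    jordanBlock k n (μ * φ) * diagonal (fun i : Fin n => μ ^ (i : ℕ)) =
      μ • (diagonal (fun i : Fin n => μ ^ (i : ℕ)) * jordanBlock k n φ) := by
  ext i j
  rw [mul_diagonal, Matrix.smul_apply, diagonal_mul]
  simp only [jordanBlock, of_apply, smul_eq_mul]
  split_ifs with hij hsucc
  · subst hij
    ring
  · rw [← hsucc]
    ring
  · ring

theorem sq_smul_one_add_jordanBlock_mul_diagonal_pow (ζ φ : k) :
    (ζ ^ 2 • (1 : Matrix (Fin n) (Fin n) k) + jordanBlock k n (ζ ^ 2 * φ)) *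
        diagonal (fun i : Fin n => (ζ ^ 2) ^ (i : ℕ)) =
      ζ • (diagonal (fun i : Fin n => (ζ ^ 2) ^ (i : ℕ)) * (ζ • (1 + jordanBlock k n φ))) := by
  rw [add_mul, jordanBlock_mul_diagonal_pow]
  simp only [Matrix.smul_mul, Matrix.mul_smul, one_mul, mul_one, mul_add]
  module

theorem one_add_sq_smul_jordanBlock_mul_diagonal_pow {ζ : k} (hζ : ζ ^ 3 = 1) (φ : k) :
    (1 + ζ ^ 2 • jordanBlock k n (ζ ^ 2 * φ)) * diagonal (fun i : Fin n => (ζ ^ 2) ^ (i : ℕ)) =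
      ζ • (diagonal (fun i : Fin n => (ζ ^ 2) ^ (i : ℕ)) *
        (ζ ^ 2 • (1 : Matrix (Fin n) (Fin n) k) + jordanBlock k n φ)) := by
  rw [add_mul, Matrix.smul_mul, jordanBlock_mul_diagonal_pow]
  simp only [Matrix.mul_smul, one_mul, mul_one, mul_add]
  match_scalars
  · linear_combination -hζ
  · linear_combination ζ * hζ

theorem fromBlocks_one_mul_fromBlocks_one {m R : Type*} [Fintype m] [DecidableEq m] [Semiring R]
    (A B : Matrix m m R) :
    (fromBlocks 1 A 0 1 * fromBlocks 1 B 0 1 : Matrix (m ⊕ m) (m ⊕ m) R) =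
      fromBlocks 1 (A + B) 0 1 := by
  simp [fromBlocks_multiply, add_comm]

theorem fromBlocks_one_mul_fromBlocks_smul {m R : Type*} [Fintype m] [DecidableEq m]
    [CommSemiring R] {A B D : Matrix m m R} {c : R} (h : A * D = c • (D * B)) :
    fromBlocks 1 A 0 1 * fromBlocks (c • D) 0 0 D =
      fromBlocks (c • D) 0 0 D * fromBlocks 1 B 0 1 := by
  simp [fromBlocks_multiply, h]

end JordanBlock

section Generation

variable {k K X X' : Type*} [CommRing k] [Group K] [AddCommGroup X] [Module k X]
  [AddCommGroup X'] [Module k X'] {V : Representation k K X} {V' : Representation k K X'}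

/-- A linear isomorphism that is equivariant under a generating set, as an isomorphism of
representations. -/
def equivOfClosureEqTop {S : Set K} (hS : Subgroup.closure S = ⊤) (e : X ≃ₗ[k] X')
    (he : ∀ g ∈ S, e ∘ₗ V g = V' g ∘ₗ e) : V.Equiv V' :=
  have hconj : (e.conjAlgEquiv k).toAlgHom.toMonoidHom.comp V = V' :=
    MonoidHom.eq_of_eqOn_dense hS fun g hg => by
      change e ∘ₗ V g ∘ₗ e.symm = V' g
      rw [← LinearMap.comp_assoc, he g hg, LinearMap.comp_assoc, e.comp_symm, LinearMap.comp_id]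
  .mk e fun g => by
    rw [← hconj]
    ext x
    simp

end Generation

section JordanRep

open Matrix

variable {k : Type} {K : Type*} [Field k] [Group K] {n : ℕ} {ζ φ ψ : k} {σ τ : K}
  {V V' : Representation k K (Fin n ⊕ Fin n → k)}

/-- `V` is the representation `V_φ` of the informal statement: the generators `σ` and `τ` act by
the given block matrices. -/
structure IsJordanRep (V : Representation k K (Fin n ⊕ Fin n → k)) (ζ φ : k) (σ τ : K) : Prop where
  apply_σ : V σ = toLin' (fromBlocks 1 (ζ • (1 + jordanBlock k n φ)) 0 1)
  apply_τ : V τ = toLin' (fromBlocks 1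
    (ζ ^ 2 • (1 : Matrix (Fin n) (Fin n) k) + jordanBlock k n φ) 0 1)

namespace IsJordanRep

theorem apply_τ_mul_σ [CharP k 2] (hζ : IsPrimitiveRoot ζ 3) (hV : IsJordanRep V ζ φ σ τ) :
    V (τ * σ) = toLin' (fromBlocks 1 (1 + ζ ^ 2 • jordanBlock k n φ) 0 1) := by
  have hsum : 1 + ζ + ζ ^ 2 = 0 := by
    simpa [Finset.sum_range_succ] using hζ.geom_sum_eq_zero (by norm_num)
  have h1 : ζ ^ 2 + ζ = 1 := by
    linear_combination hsum - CharTwo.two_eq_zero (R := k)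
  have hζ2 : 1 + ζ = ζ ^ 2 := by
    linear_combination hsum - ζ ^ 2 * CharTwo.two_eq_zero (R := k)
  have hblock : ζ ^ 2 • (1 : Matrix (Fin n) (Fin n) k) + jordanBlock k n φ +
      ζ • (1 + jordanBlock k n φ) = 1 + ζ ^ 2 • jordanBlock k n φ := by
    calc _ = (ζ ^ 2 + ζ) • (1 : Matrix (Fin n) (Fin n) k) + (1 + ζ) • jordanBlock k n φ := by
          module
      _ = _ := by rw [h1, hζ2, one_smul]
  rw [map_mul, hV.apply_τ, hV.apply_σ, Module.End.mul_eq_comp, ← toLin'_mul,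
    fromBlocks_one_mul_fromBlocks_one, hblock]

theorem nonempty_equiv_comp [CharP k 2] (hζ : IsPrimitiveRoot ζ 3)
    (hgen : Subgroup.closure {σ, τ} = ⊤) (hV : IsJordanRep V ζ (ζ ^ 2 * ψ) σ τ)
    (hV' : IsJordanRep V' ζ ψ σ τ) {α : K ≃* K} (hασ : α σ = τ) (hατ : α τ = τ * σ) :
    Nonempty (V'.Equiv (V.comp α.toMonoidHom)) := by
  have hζ0 : ζ ≠ 0 := hζ.ne_zero (by norm_num)
  set D : Matrix (Fin n) (Fin n) k := diagonal fun i => (ζ ^ 2) ^ (i : ℕ)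
  set P := fromBlocks (ζ • D) 0 0 D
  have hD : IsUnit D := isUnit_diagonal.2 <| Pi.isUnit_iff.2 fun i =>
    (pow_ne_zero _ (pow_ne_zero _ hζ0)).isUnit
  have hP : IsUnit P := isUnit_fromBlocks_zero₂₁.2 ⟨hD.smul (Units.mk0 ζ hζ0), hD⟩
  have he (g : K) (hg : g ∈ ({σ, τ} : Set K)) : toLin' P ∘ₗ V' g = V (α g) ∘ₗ toLin' P := by
    obtain rfl | rfl := hg
    · rw [hασ, hV'.apply_σ, hV.apply_τ, ← toLin'_mul, ← toLin'_mul,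
        fromBlocks_one_mul_fromBlocks_smul
          (sq_smul_one_add_jordanBlock_mul_diagonal_pow ζ ψ)]
    · rw [hατ, hV'.apply_τ, hV.apply_τ_mul_σ hζ, ← toLin'_mul, ← toLin'_mul,
        fromBlocks_one_mul_fromBlocks_smul
          (one_add_sq_smul_jordanBlock_mul_diagonal_pow hζ.pow_eq_one ψ)]
  exact ⟨equivOfClosureEqTop hgen (toLinearEquiv' P hP.invertible) he⟩

theorem nonempty_ind_equiv [CharP k 2] (hζ : IsPrimitiveRoot ζ 3)
    {G : Type*} [Group G] {f : K →* G} (hgen : Subgroup.closure {σ, τ} = ⊤)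
    {α : K ≃* K} (hασ : α σ = τ) (hατ : α τ = τ * σ)
    {g : G} (hα : ∀ h, f (α h) = g * f h * g⁻¹) (hφψ : φ ^ 3 = ψ ^ 3)
    (hV : IsJordanRep V ζ φ σ τ) (hV' : IsJordanRep V' ζ ψ σ τ) :
    Nonempty ((ind f V).Equiv (ind f V')) := by
  have hψ : ψ ∈ Polynomial.nthRoots 3 (ψ ^ 3) := (Polynomial.mem_nthRoots (by norm_num)).2 rfl
  obtain rfl | rfl | rfl : ψ = ζ ^ 2 * φ ∨ ψ = ζ * φ ∨ ψ = φ := by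
    simpa [hζ.nthRoots_eq hφψ] using hψ
  · obtain ⟨P⟩ := nonempty_equiv_comp hζ hgen hV' hV hασ hατ
    exact ⟨indConjEquiv α g hα P⟩
  · have hφ : φ = ζ ^ 2 * (ζ * φ) := by linear_combination -φ * hζ.pow_eq_one
    obtain ⟨P⟩ := nonempty_equiv_comp hζ hgen (hφ ▸ hV) hV' hασ hατ
    exact ⟨(indConjEquiv α g hα P).symm⟩
  · obtain rfl : V = V' := MonoidHom.eq_of_eqOn_dense hgen <| by
      rintro _ (rfl | rfl)
      exacts [hV.apply_σ.trans hV'.apply_σ.symm, hV.apply_τ.trans hV'.apply_τ.symm]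
    exact ⟨.refl _⟩

end IsJordanRep

end JordanRep

theorem stmt_13_general {k : Type} [Field k] [CharP k 2] {ζ : k} (hζ : IsPrimitiveRoot ζ 3)
    {G : Type*} [Group G] {σ ρ : G} (hσ : σ ^ 2 = 1) (hρ : ρ ^ 3 = 1) (hσρ : (σ * ρ) ^ 3 = 1)
    (hgen : Subgroup.closure {σ, ρ} = ⊤) {τ : G} (hτ : τ = ρ * σ * ρ⁻¹)
    {H : Subgroup G} (hH : H = Subgroup.closure {σ, τ}) (hσH : σ ∈ H) (hτH : τ ∈ H)
    {n : ℕ} {φ ψ : k} (hφψ : φ ^ 3 = ψ ^ 3)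
    {Vφ Vψ : Representation k H (Fin n ⊕ Fin n → k)}
    (hVφ : IsJordanRep Vφ ζ φ ⟨σ, hσH⟩ ⟨τ, hτH⟩) (hVψ : IsJordanRep Vψ ζ ψ ⟨σ, hσH⟩ ⟨τ, hτH⟩)
    {W : Type*} [AddCommGroup W] [Module k W] {U : Representation k G W}
    {ι : (Fin n ⊕ Fin n → k) →ₗ[k] W}
    (hU : IsInternallyInduced H.subtype Vφ U ι fun i : Fin 3 => ρ ^ (i : ℕ))
    {W' : Type*} [AddCommGroup W'] [Module k W'] {U' : Representation k G W'}
    {ι' : (Fin n ⊕ Fin n → k) →ₗ[k] W'}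
    (hU' : IsInternallyInduced H.subtype Vψ U' ι' fun i : Fin 3 => ρ ^ (i : ℕ)) :
    Nonempty (U.Equiv U') := by
  subst hτ hH
  have := normal_closure_pair_conj hσ hρ hσρ hgen
  have hs := exists_eq_pow_mul_of_closure_pair_eq_top hσH hρ hgen
  obtain ⟨e⟩ := hVφ.nonempty_ind_equiv hζ (f := (Subgroup.closure {σ, ρ * σ * ρ⁻¹}).subtype)
    (closure_pair_subtype_eq_top _ _ hσH hτH)
    (α := MulAut.conjNormal ρ) rfl (Subtype.ext (conj_conj_eq_conj_mul hσ hρ hσρ))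
    (MulAut.conjNormal_apply ρ) hφψ hVψ
  exact ⟨((hU.indEquiv hs).symm.trans e).trans (hU'.indEquiv hs)⟩

/-- **Lemma.** Let `G = A₄ = ⟨σ, ρ⟩`, `τ = ρσρ⁻¹`, `H = ⟨σ, τ⟩` its Sylow 2-subgroup.
If `φ, ψ ∈ k \ {0}` satisfy `φ³ = ψ³`, then `Ind_H^G V_φ ≅ Ind_H^G V_ψ` as
representations of `G`; induced modules are encoded by the data of an injective
`H`-equivariant embedding whose three `ρ`-translates form an internal direct sum. -/
theorem stmt_13 (k : Type) [Field k] [IsAlgClosed k] [CharP k 2]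
    (ζ : k) (hζ : IsPrimitiveRoot ζ 3)
    (G : Type) [Group G] (σ ρ : G)
    (hσ : σ ^ 2 = 1) (hρ : ρ ^ 3 = 1) (hσρ : (σ * ρ) ^ 3 = 1)
    (hcard : Nat.card G = 12) (hgen : Subgroup.closure {σ, ρ} = ⊤)
    (τ : G) (hτ : τ = ρ * σ * ρ⁻¹)
    (H : Subgroup G) (hH : H = Subgroup.closure {σ, τ})
    (hσH : σ ∈ H) (hτH : τ ∈ H)
    (n : ℕ) (hn : 1 ≤ n) (φ ψ : k) (hφ : φ ≠ 0) (hψ : ψ ≠ 0) (hφψ : φ ^ 3 = ψ ^ 3)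
    -- the representations V_φ and V_ψ of H
    (Vφ Vψ : Representation k ↥H (Fin n ⊕ Fin n → k))
    (hVφσ : Vφ ⟨σ, hσH⟩ =
      Matrix.toLin' (Matrix.fromBlocks 1 (ζ • (1 + jordanBlock k n φ)) 0 1))
    (hVφτ : Vφ ⟨τ, hτH⟩ =
      Matrix.toLin' (Matrix.fromBlocks 1
        (ζ ^ 2 • (1 : Matrix (Fin n) (Fin n) k) + jordanBlock k n φ) 0 1))
    (hVψσ : Vψ ⟨σ, hσH⟩ =
      Matrix.toLin' (Matrix.fromBlocks 1 (ζ • (1 + jordanBlock k n ψ)) 0 1))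
    (hVψτ : Vψ ⟨τ, hτH⟩ =
      Matrix.toLin' (Matrix.fromBlocks 1
        (ζ ^ 2 • (1 : Matrix (Fin n) (Fin n) k) + jordanBlock k n ψ) 0 1))
    -- a G-representation U realizing Ind_H^G V_φ
    (W : Type) [AddCommGroup W] [Module k W]
    (U : Representation k G W)
    (ι : (Fin n ⊕ Fin n → k) →ₗ[k] W)
    (hinj : Function.Injective ι)
    (hequiv : ∀ (h : ↥H) (v : Fin n ⊕ Fin n → k), ι (Vφ h v) = U (h : G) (ι v))
    (hint : DirectSum.IsInternal fun i : Fin 3 =>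
      Submodule.map (U ρ ^ (i : ℕ)) (LinearMap.range ι))
    -- a G-representation U' realizing Ind_H^G V_ψ
    (W' : Type) [AddCommGroup W'] [Module k W']
    (U' : Representation k G W')
    (ι' : (Fin n ⊕ Fin n → k) →ₗ[k] W')
    (hinj' : Function.Injective ι')
    (hequiv' : ∀ (h : ↥H) (v : Fin n ⊕ Fin n → k), ι' (Vψ h v) = U' (h : G) (ι' v))
    (hint' : DirectSum.IsInternal fun i : Fin 3 =>
      Submodule.map (U' ρ ^ (i : ℕ)) (LinearMap.range ι')) :
    -- conclusion: Ind_H^G V_φ ≅ Ind_H^G V_ψ as representations of G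
    ∃ e : W ≃ₗ[k] W', ∀ (g : G) (w : W), e (U g w) = U' g (e w) := by
  obtain ⟨e⟩ := stmt_13_general hζ hσ hρ hσρ hgen hτ hH hσH hτH hφψ ⟨hVφσ, hVφτ⟩ ⟨hVψσ, hVψτ⟩
    ⟨hinj, hequiv, by simpa only [map_pow] using hint⟩
    ⟨hinj', hequiv', by simpa only [map_pow] using hint'⟩
  exact ⟨e.toLinearEquiv, fun g w => LinearMap.congr_fun (e.isIntertwining' g) w⟩
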